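/- arXiv:1203.3995 — 2 statements merged into one kernel-verified Lean document; each statement's English description precedes it below -/
import Mathlib

section
/- For every n ≥ 1 and 1 ≤ m ≤ n, the Gårding cone Γ_m is a convex cone in ℝⁿ: if λ, μ ∈ Γ_m and s, t > 0 then sλ + tμ ∈ Γ_m. -/
noncomputable section

/-- `σ_k(λ)`, the `k`-th elementary symmetric polynomial of `λ ∈ ℝⁿ`. -/
def esymm (n k : ℕ) (lam : Fin n → ℝ) : ℝ :=
  ∑ s ∈ Finset.univ.powersetCard k, ∏ i ∈ s, lam i

/-- The Gårding cone `Γ_m = {λ ∈ ℝⁿ : σ_1(λ) > 0, …, σ_m(λ) > 0}`. -/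
def gardingCone (n m : ℕ) : Set (Fin n → ℝ) :=
  {lam | ∀ k, 1 ≤ k → k ≤ m → 0 < esymm n k lam}

/-!
Marcus and Lopes: the quotient `q_k = σ_{k+1} / σ_k` is superadditive on `Γ_k`. Writing `λ|i` for
`λ` with its `i`-th entry removed, this follows by induction on `k` from the identity
`(k + 2) q_{k+1}(λ) = ∑ i, (λ_i - λ_i² / (λ_i + q_k(λ|i)))`,
because `(a, A) ↦ a² / A` is subadditive and decreasing in `A`. The induction applies to `λ|i`
because removing an entry maps `Γ_{k+1}` into `Γ_k`; this is where real-rootedness enters, through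
Newton's inequality `σ_k σ_{k+2} ≤ σ_{k+1}²`. Superadditivity of `q_k` then shows, one `k` at a
time, that `σ_{k+1}` stays positive under addition.
-/

open Finset Polynomial

section ElementarySymmetric

variable {ι R : Type*} [CommSemiring R]

/-- The `k`-th elementary symmetric polynomial in the entries `x i`, `i ∈ S`. The index set is
a finset of an arbitrary type so that entries can be removed with `S.erase i`. -/
def esymmOn (S : Finset ι) (k : ℕ) (x : ι → R) : R :=
  ∑ s ∈ S.powersetCard k, ∏ i ∈ s, x i

@[simp]
lemma esymmOn_zero (S : Finset ι) (x : ι → R) : esymmOn S 0 x = 1 := by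
  simp [esymmOn]

@[simp]
lemma esymmOn_one (S : Finset ι) (x : ι → R) : esymmOn S 1 x = ∑ i ∈ S, x i := by
  simp [esymmOn, powersetCard_one]

lemma esymmOn_smul (S : Finset ι) (k : ℕ) (c : R) (x : ι → R) :
    esymmOn S k (c • x) = c ^ k * esymmOn S k x := by
  rw [esymmOn, esymmOn, mul_sum]
  refine sum_congr rfl fun s hs ↦ ?_
  simp [prod_mul_distrib, (mem_powersetCard.1 hs).2]

lemma coeff_prod_one_add_C_mul_X (S : Finset ι) (k : ℕ) (x : ι → R) :
    (∏ i ∈ S, (1 + C (x i) * X)).coeff k = esymmOn S k x := by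
  have coeff_term (s : Finset ι) : (∏ i ∈ s, C (x i) * X).coeff k =
      if #s = k then ∏ i ∈ s, x i else 0 := by
    rw [prod_mul_distrib, prod_const, ← map_prod, coeff_C_mul_X_pow]
    simp only [eq_comm]
  simp only [prod_one_add, finsetSum_coeff, coeff_term, ← sum_filter, esymmOn,
    powersetCard_eq_filter]

variable [DecidableEq ι]

lemma esymmOn_succ_eq_erase {S : Finset ι} {i : ι} (hi : i ∈ S) (k : ℕ) (x : ι → R) :
    esymmOn S (k + 1) x = esymmOn (S.erase i) (k + 1) x + x i * esymmOn (S.erase i) k x := by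
  simp only [← coeff_prod_one_add_C_mul_X]
  rw [← mul_prod_erase S _ hi, add_mul, one_mul, coeff_add, mul_assoc, coeff_C_mul, coeff_X_mul]

lemma esymmOn_succ_mul_succ (S : Finset ι) (k : ℕ) (x : ι → R) :
    esymmOn S (k + 1) x * (k + 1) = ∑ i ∈ S, x i * esymmOn (S.erase i) k x := by
  have derivative_prod : derivative (∏ i ∈ S, (1 + C (x i) * X)) =
      ∑ i ∈ S, C (x i) * ∏ j ∈ S.erase i, (1 + C (x j) * X) := by
    have derivative_factor (i : ι) : derivative (1 + C (x i) * X) = C (x i) := by simp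
    rw [derivative_prod_finset]
    exact sum_congr rfl fun i _ ↦ by rw [derivative_factor, mul_comm]
  simpa only [coeff_derivative, finsetSum_coeff, coeff_C_mul, coeff_prod_one_add_C_mul_X]
    using congr_arg (coeff · k) derivative_prod

end ElementarySymmetric

section NewtonInequality

variable {K : Type*} [Field K] [LinearOrder K] [IsStrictOrderedRing K]

lemma eval_mul_eval_derivative_derivative_le_sq {p : K[X]} (hp : p.Splits) (a : K) :
    p.eval a * p.derivative.derivative.eval a ≤ p.derivative.eval a ^ 2 := by
  refine Submonoid.closure_induction (motive := fun p _ ↦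
    p.eval a * p.derivative.derivative.eval a ≤ p.derivative.eval a ^ 2) ?_ ?_ ?_ hp
  · rintro q (⟨c, rfl⟩ | ⟨c, rfl⟩) <;> simp
  · simp
  · intro f g _ _ hf hg
    simp only [derivative_mul, derivative_add, eval_mul, eval_add]
    -- The defect of `f * g` is `g ^ 2` times that of `f` plus `f ^ 2` times that of `g`.
    linarith [mul_le_mul_of_nonneg_left hf (sq_nonneg (g.eval a)),
      mul_le_mul_of_nonneg_left hg (sq_nonneg (f.eval a))]

lemma splits_derivative_of_splits {p : ℝ[X]} (hp : p.Splits) : p.derivative.Splits := by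
  rw [splits_iff_card_roots] at hp ⊢
  have rolle := card_roots_le_derivative p
  have card_le := card_roots' p.derivative
  have degree_le := natDegree_derivative_le p
  omega

lemma splits_iterate_derivative_of_splits {p : ℝ[X]} (hp : p.Splits) (k : ℕ) :
    (derivative^[k] p).Splits := by
  induction k with
  | zero => exact hp
  | succ k ih =>
    rw [Function.iterate_succ_apply']
    exact splits_derivative_of_splits ih

lemma add_two_mul_coeff_mul_coeff_le_sq {p : ℝ[X]} (hp : p.Splits) (k : ℕ) :
    (k + 2) * (p.coeff k * p.coeff (k + 2)) ≤ (k + 1) * p.coeff (k + 1) ^ 2 := by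
  have laguerre :=
    eval_mul_eval_derivative_derivative_le_sq (splits_iterate_derivative_of_splits hp k) 0
  simp only [← Function.iterate_succ_apply' derivative, ← coeff_zero_eq_eval_zero,
    coeff_iterate_derivative, zero_add, Nat.descFactorial_self, nsmul_eq_mul, Nat.factorial_succ,
    Nat.cast_mul, Nat.cast_add, Nat.cast_one] at laguerre
  refine le_of_mul_le_mul_left ?_ (by positivity : 0 < (k.factorial : ℝ) ^ 2 * (k + 1))
  linarith

lemma coeff_mul_coeff_add_two_le_sq {p : ℝ[X]} (hp : p.Splits) (k : ℕ) :
    p.coeff k * p.coeff (k + 2) ≤ p.coeff (k + 1) ^ 2 := by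
  have newton := add_two_mul_coeff_mul_coeff_le_sq hp k
  by_contra! h
  have : 0 < p.coeff k * p.coeff (k + 2) := (sq_nonneg _).trans_lt h
  nlinarith

lemma esymmOn_mul_esymmOn_add_two_le_sq {ι : Type*} (S : Finset ι) (k : ℕ) (x : ι → ℝ) :
    esymmOn S k x * esymmOn S (k + 2) x ≤ esymmOn S (k + 1) x ^ 2 := by
  simp only [← coeff_prod_one_add_C_mul_X]
  refine coeff_mul_coeff_add_two_le_sq (Splits.prod fun i _ ↦ ?_) k
  exact Splits.of_natDegree_le_one (by compute_degree)

end NewtonInequality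

section GardingConeOn

variable {ι R : Type*} [CommSemiring R] [PartialOrder R] {S : Finset ι} {m k : ℕ} {x : ι → R}

/-- The Gårding cone in the coordinates `i ∈ S`; `gardingCone n m` is the case
`S = (univ : Finset (Fin n))`. -/
def gardingConeOn (S : Finset ι) (m : ℕ) : Set (ι → R) :=
  {x | ∀ k, 1 ≤ k → k ≤ m → 0 < esymmOn S k x}

lemma gardingConeOn_antitone (S : Finset ι) :
    Antitone (gardingConeOn S : ℕ → Set (ι → R)) :=
  fun _ _ hkm _ hx j hj hjk ↦ hx j hj (hjk.trans hkm)

lemma mem_gardingConeOn_succ :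
    x ∈ gardingConeOn S (m + 1) ↔ x ∈ gardingConeOn S m ∧ 0 < esymmOn S (m + 1) x := by
  refine ⟨fun hx ↦ ⟨gardingConeOn_antitone S m.le_succ hx, hx _ (by omega) le_rfl⟩, ?_⟩
  rintro ⟨hx, hpos⟩ k hk hkm
  rcases Nat.le_succ_iff.1 hkm with hkm | rfl
  · exact hx k hk hkm
  · exact hpos

variable [IsStrictOrderedRing R]

lemma esymmOn_pos_of_mem_gardingConeOn (hx : x ∈ gardingConeOn S m) (hk : k ≤ m) :
    0 < esymmOn S k x := by
  rcases k.eq_zero_or_pos with rfl | hk_pos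
  · simp
  · exact hx k hk_pos hk

lemma smul_mem_gardingConeOn {c : R} (hc : 0 < c) (hx : x ∈ gardingConeOn S m) :
    c • x ∈ gardingConeOn S m := by
  intro k hk hkm
  rw [esymmOn_smul]
  exact mul_pos (pow_pos hc k) (hx k hk hkm)

lemma mem_gardingConeOn_erase [DecidableEq ι] {x : ι → ℝ} {i : ι} (hi : i ∈ S)
    (hx : x ∈ gardingConeOn S (m + 1)) : x ∈ gardingConeOn (S.erase i) m := by
  induction m with
  | zero => exact fun k hk hk0 ↦ absurd hk0 (by omega)
  | succ m ih =>
    have hx_erase := ih (gardingConeOn_antitone S (by omega) hx)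
    refine mem_gardingConeOn_succ.2 ⟨hx_erase, ?_⟩
    have h₀ : 0 < esymmOn (S.erase i) m x := esymmOn_pos_of_mem_gardingConeOn hx_erase le_rfl
    have h₁ := hx (m + 1) (by omega) (by omega)
    have h₂ := hx (m + 2) (by omega) le_rfl
    rw [esymmOn_succ_eq_erase hi] at h₁ h₂
    have newton := esymmOn_mul_esymmOn_add_two_le_sq (S.erase i) m x
    by_contra! h_nonpos
    refine newton.not_gt ?_
    calc
      esymmOn (S.erase i) (m + 1) x ^ 2
        ≤ esymmOn (S.erase i) m x * -(x i * esymmOn (S.erase i) (m + 1) x) := by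
          linarith [mul_nonpos_of_nonpos_of_nonneg h_nonpos h₁.le]
      _ < esymmOn (S.erase i) m x * esymmOn (S.erase i) (m + 2) x :=
          mul_lt_mul_of_pos_left (neg_lt_iff_pos_add.2 h₂) h₀

end GardingConeOn

section EsymmRatio

variable {ι K : Type*} [Field K] {S : Finset ι} {k : ℕ} {x : ι → K}

/-- The Marcus–Lopes quotient `q_k = σ_{k+1} / σ_k` in the entries `x i`, `i ∈ S`, with the junk
value `0` where `σ_k` vanishes. -/
def esymmRatio (S : Finset ι) (k : ℕ) (x : ι → K) : K :=
  esymmOn S (k + 1) x / esymmOn S k x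

lemma add_esymmRatio_erase [DecidableEq ι] {i : ι} (hi : i ∈ S)
    (h : esymmOn (S.erase i) k x ≠ 0) :
    x i + esymmRatio (S.erase i) k x = esymmOn S (k + 1) x / esymmOn (S.erase i) k x := by
  rw [esymmRatio, esymmOn_succ_eq_erase hi]
  field_simp
  ring

lemma add_two_mul_esymmRatio_succ [DecidableEq ι] (hS : esymmOn S (k + 1) x ≠ 0)
    (h_erase : ∀ i ∈ S, esymmOn (S.erase i) k x ≠ 0) :
    (k + 2) * esymmRatio S (k + 1) x =
      ∑ i ∈ S, (x i - x i ^ 2 / (x i + esymmRatio (S.erase i) k x)) := by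
  have euler : (k + 2) * esymmOn S (k + 2) x = ∑ i ∈ S, x i * esymmOn (S.erase i) (k + 1) x := by
    rw [← esymmOn_succ_mul_succ]
    push_cast
    ring
  rw [esymmRatio, ← mul_div_assoc, euler, sum_div]
  refine sum_congr rfl fun i hi ↦ ?_
  rw [add_esymmRatio_erase hi (h_erase i hi),
    eq_sub_of_add_eq (esymmOn_succ_eq_erase hi k x).symm]
  have := h_erase i hi
  field_simp

lemma sub_sq_div_add_sub_sq_div_le [LinearOrder K] [IsStrictOrderedRing K] {A B D : K}
    (hA : 0 < A) (hB : 0 < B) (hD : A + B ≤ D) (a b : K) :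
    (a - a ^ 2 / A) + (b - b ^ 2 / B) ≤ (a + b) - (a + b) ^ 2 / D := by
  have titu : (a + b) ^ 2 / (A + B) ≤ a ^ 2 / A + b ^ 2 / B := by
    simpa [hA, hB] using sq_sum_div_le_sum_sq_div univ ![a, b] (g := ![A, B])
  have antitone : (a + b) ^ 2 / D ≤ (a + b) ^ 2 / (A + B) := by gcongr
  linarith

lemma add_esymmRatio_erase_pos [DecidableEq ι] {x : ι → ℝ} {i : ι} (hi : i ∈ S)
    (hx : x ∈ gardingConeOn S (k + 1)) : 0 < x i + esymmRatio (S.erase i) k x := by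
  have h_erase : 0 < esymmOn (S.erase i) k x :=
    esymmOn_pos_of_mem_gardingConeOn (mem_gardingConeOn_erase hi hx) le_rfl
  rw [add_esymmRatio_erase hi h_erase.ne']
  exact div_pos (esymmOn_pos_of_mem_gardingConeOn hx le_rfl) h_erase

lemma add_two_mul_esymmRatio_succ_of_mem_gardingConeOn [DecidableEq ι] {x : ι → ℝ}
    (hx : x ∈ gardingConeOn S (k + 1)) :
    (k + 2) * esymmRatio S (k + 1) x =
      ∑ i ∈ S, (x i - x i ^ 2 / (x i + esymmRatio (S.erase i) k x)) :=
  add_two_mul_esymmRatio_succ (esymmOn_pos_of_mem_gardingConeOn hx le_rfl).ne' fun _ hi ↦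
    (esymmOn_pos_of_mem_gardingConeOn (mem_gardingConeOn_erase hi hx) le_rfl).ne'

lemma esymmRatio_add_esymmRatio_le {x y : ι → ℝ} (hx : x ∈ gardingConeOn S k)
    (hy : y ∈ gardingConeOn S k) (hxy : x + y ∈ gardingConeOn S k) :
    esymmRatio S k x + esymmRatio S k y ≤ esymmRatio S k (x + y) := by
  classical
  induction k generalizing S with
  | zero => simp [esymmRatio, sum_add_distrib]
  | succ k ih =>
    refine le_of_mul_le_mul_left ?_ (by positivity : (0 : ℝ) < k + 2)
    rw [mul_add, add_two_mul_esymmRatio_succ_of_mem_gardingConeOn hx,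
      add_two_mul_esymmRatio_succ_of_mem_gardingConeOn hy,
      add_two_mul_esymmRatio_succ_of_mem_gardingConeOn hxy, ← sum_add_distrib]
    refine sum_le_sum fun i hi ↦ sub_sq_div_add_sub_sq_div_le
      (add_esymmRatio_erase_pos hi hx) (add_esymmRatio_erase_pos hi hy) ?_ _ _
    have ratio_erase := ih (mem_gardingConeOn_erase hi hx) (mem_gardingConeOn_erase hi hy)
      (mem_gardingConeOn_erase hi hxy)
    rw [Pi.add_apply]
    linarith

end EsymmRatio

section Convexity

variable {ι : Type*} {S : Finset ι} {m : ℕ}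

lemma esymmRatio_pos_of_mem_gardingConeOn {x : ι → ℝ} (hx : x ∈ gardingConeOn S (m + 1)) :
    0 < esymmRatio S m x :=
  div_pos (esymmOn_pos_of_mem_gardingConeOn hx le_rfl)
    (esymmOn_pos_of_mem_gardingConeOn hx m.le_succ)

lemma add_mem_gardingConeOn {x y : ι → ℝ} (hx : x ∈ gardingConeOn S m)
    (hy : y ∈ gardingConeOn S m) : x + y ∈ gardingConeOn S m := by
  induction m with
  | zero => exact fun k hk hk0 ↦ absurd hk0 (by omega)
  | succ m ih =>
    have hx' := gardingConeOn_antitone S m.le_succ hx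
    have hy' := gardingConeOn_antitone S m.le_succ hy
    have hxy := ih hx' hy'
    have ratio_pos : 0 < esymmRatio S m (x + y) :=
      (add_pos (esymmRatio_pos_of_mem_gardingConeOn hx)
        (esymmRatio_pos_of_mem_gardingConeOn hy)).trans_le
        (esymmRatio_add_esymmRatio_le hx' hy' hxy)
    have denom_pos := esymmOn_pos_of_mem_gardingConeOn hxy le_rfl
    exact mem_gardingConeOn_succ.2 ⟨hxy, (div_pos_iff_of_pos_right denom_pos).1 ratio_pos⟩

end Convexity

/-- **Gårding's theorem**: the cone `Γ_m` is a convex cone in `ℝⁿ`. -/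
theorem gardingCone_convex_cone
    (n m : ℕ) (hn : 1 ≤ n) (hm : 1 ≤ m) (hmn : m ≤ n)
    (lam mu : Fin n → ℝ)
    (hlam : lam ∈ gardingCone n m) (hmu : mu ∈ gardingCone n m)
    (s t : ℝ) (hs : 0 < s) (ht : 0 < t) :
    s • lam + t • mu ∈ gardingCone n m := by
  have gardingCone_eq : gardingCone n m = gardingConeOn univ m := rfl
  rw [gardingCone_eq] at hlam hmu ⊢
  exact add_mem_gardingConeOn (smul_mem_gardingConeOn hs hlam) (smul_mem_gardingConeOn ht hmu)
end
end

section
/- Let u : ℂⁿ → ℝ be a C² function, let r > 0, z₀ ∈ ℂⁿ and c₁ > 0. For w ∈ ℂⁿ write ∂_w u = Σ_{j=1}^n w_j ∂u/∂z_j. Suppose that for every w ∈ ℂⁿ with ‖w‖ = 1 one has (1/Vol(B(z₀,r))) ∫_{B(z₀,r)} |∂_w u|² dV ≥ c₁. Then the function z ↦ [u²]_r(z) is C² near z₀ and for every w ∈ ℂⁿ with ‖w‖ = 1: w* H_{[u²]_r}(z₀) w ≥ 2·(1/Vol(B(z₀,r))) ∫_{B(z₀,r)} u·(w* H_u w) dV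 + 2c₁. -/
open MeasureTheory Metric Complex

noncomputable section

/-- The `j`-th standard basis vector of `ℂⁿ`. -/
def ebasis (n : ℕ) (j : Fin n) : EuclideanSpace ℂ (Fin n) :=
  EuclideanSpace.single j 1

/-- The complex Hessian matrix `(H_u(z))_{jk} = ∂²u/∂z_j∂z̄_k(z)`, expressed through real
second derivatives: `∂²u/∂z_j∂z̄_k = ¼[(u_{x_jx_k} + u_{y_jy_k}) + i(u_{x_jy_k} - u_{y_jx_k})]`. -/
def complexHessian {n : ℕ} (u : EuclideanSpace ℂ (Fin n) → ℝ)
    (z : EuclideanSpace ℂ (Fin n)) : Matrix (Fin n) (Fin n) ℂ :=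
  fun j k =>
    (1 / 4 : ℂ) *
      (((iteratedFDeriv ℝ 2 u z ![ebasis n j, ebasis n k]
          + iteratedFDeriv ℝ 2 u z ![Complex.I • ebasis n j, Complex.I • ebasis n k] : ℝ) : ℂ)
        + Complex.I *
          ((iteratedFDeriv ℝ 2 u z ![ebasis n j, Complex.I • ebasis n k]
            - iteratedFDeriv ℝ 2 u z ![Complex.I • ebasis n j, ebasis n k] : ℝ) : ℂ))

instance (n : ℕ) : MeasurableSpace (EuclideanSpace ℂ (Fin n)) := borel _
instance (n : ℕ) : BorelSpace (EuclideanSpace ℂ (Fin n)) := ⟨rfl⟩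

/-- The Wirtinger derivative `∂u/∂z_j = ½(∂u/∂x_j − i ∂u/∂y_j)`. -/
def wirtingerDeriv {n : ℕ} (u : EuclideanSpace ℂ (Fin n) → ℝ) (j : Fin n)
    (z : EuclideanSpace ℂ (Fin n)) : ℂ :=
  (((fderiv ℝ u z (ebasis n j) : ℝ) : ℂ)
    - Complex.I * ((fderiv ℝ u z (Complex.I • ebasis n j) : ℝ) : ℂ)) / 2

/-- The Hermitian quadratic form `w* A w = Σ_{j,k} conj(w_j) A_{jk} w_k`. -/
def quadForm {n : ℕ} (A : Matrix (Fin n) (Fin n) ℂ) (w : EuclideanSpace ℂ (Fin n)) : ℂ :=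
  ∑ j, ∑ k, (starRingEnd ℂ) (w j) * A j k * w k

/-!
In a complex direction `v` the Levi form is `¼ (D²u(v, v) + D²u(iv, iv))`, while
`|∂_v u|² = ¼ ((D_v u)² + (D_{iv} u)²)`. Applying `D²(u²)(a, a) = 2 u D²u(a, a) + 2 (D_a u)²` with
`a = v` and `a = iv` gives the pointwise form of `dd^c u² = 2 (du ∧ d^c u + u dd^c u)`. A ball
average is an integral of translates against a fixed compactly supported probability measure, so it
commutes with differentiation. The identity thus passes to averages, and the hypothesis bounds the
gradient term from below.
-/

open scoped Topology ProbabilityTheory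

section IntegralTranslate

variable {E F : Type*} [NormedAddCommGroup E] [NormedAddCommGroup F] {K : Set E} {g : E → F}

theorem exists_eventually_forall_norm_translate_le (hK : IsCompact K) (hg : Continuous g) (z : E) :
    ∃ C, ∀ᶠ y in 𝓝 z, ∀ x ∈ K, ‖g (y + x)‖ ≤ C := by
  obtain ⟨C, hC⟩ := hK.exists_bound_of_continuousOn (f := fun x => g (z + x)) (by fun_prop)
  refine ⟨C + 1, hK.eventually_forall_of_forall_eventually fun x hx => ?_⟩
  have hcont : Continuous fun p : E × E => ‖g (p.1 + p.2)‖ := by fun_prop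
  exact hcont.continuousAt.eventually_le_const ((hC x hx).trans_lt (lt_add_one C))

variable [MeasurableSpace E] [BorelSpace E] {ν : Measure E} [IsFiniteMeasure ν]

theorem integrable_translate (hK : IsCompact K) (hν : ∀ᵐ x ∂ν, x ∈ K) (hg : Continuous g) (z : E) :
    Integrable (fun x => g (z + x)) ν := by
  rw [← Measure.restrict_eq_self_of_ae_mem hν]
  exact ContinuousOn.integrableOn_compact hK (by fun_prop)

variable [NormedSpace ℝ F]

theorem continuous_integral_translate (hK : IsCompact K) (hν : ∀ᵐ x ∂ν, x ∈ K)
    (hg : Continuous g) : Continuous fun z => ∫ x, g (z + x) ∂ν := by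
  refine continuous_iff_continuousAt.2 fun z => ?_
  obtain ⟨C, hC⟩ := exists_eventually_forall_norm_translate_le hK hg z
  refine continuousAt_of_dominated (bound := fun _ => C)
    (.of_forall fun y => (integrable_translate hK hν hg y).aestronglyMeasurable)
    (hC.mono fun y hy => hν.mono hy) (integrable_const C) (.of_forall fun x => ?_)
  fun_prop

variable [NormedSpace ℝ E]

theorem hasFDerivAt_integral_translate {g' : E → E →L[ℝ] F} (hK : IsCompact K)
    (hν : ∀ᵐ x ∂ν, x ∈ K) (hg : ∀ y, HasFDerivAt g (g' y) y) (hg' : Continuous g') (z : E) :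
    HasFDerivAt (fun z => ∫ x, g (z + x) ∂ν) (∫ x, g' (z + x) ∂ν) z := by
  have hgc : Continuous g := continuous_iff_continuousAt.2 fun y => (hg y).continuousAt
  obtain ⟨C, hC⟩ := exists_eventually_forall_norm_translate_le hK hg' z
  exact hasFDerivAt_integral_of_dominated_of_fderiv_le (F' := fun y x => g' (y + x)) hC
    (.of_forall fun y => (integrable_translate hK hν hgc y).aestronglyMeasurable)
    (integrable_translate hK hν hgc z) (integrable_translate hK hν hg' z).aestronglyMeasurable
    (hν.mono fun x hx y hy => hy x hx) (integrable_const C)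
    (.of_forall fun x y _ => (hasFDerivAt_comp_add_right x).2 (hg (y + x)))

theorem hasFTaylorSeriesUpTo_integral_translate {n : WithTop ℕ∞}
    {p : E → FormalMultilinearSeries ℝ E F} (hK : IsCompact K) (hν : ∀ᵐ x ∂ν, x ∈ K)
    (hg : HasFTaylorSeriesUpTo n g p) :
    HasFTaylorSeriesUpTo n (fun z => ∫ x, g (z + x) ∂ν) (fun z m => ∫ x, p (z + x) m ∂ν) where
  zero_eq z := by
    have hint := integrable_translate hK hν (hg.cont 0 (by simp)) z
    rw [ContinuousMultilinearMap.curry0, ContinuousMultilinearMap.integral_apply hint]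
    exact integral_congr_ae (.of_forall fun x => hg.zero_eq (z + x))
  fderiv m hm z := by
    have hcont : Continuous fun y => (p y (m + 1)).curryLeft :=
      (continuousMultilinearCurryLeftEquiv ℝ (fun _ => E) F).continuous.comp
        (hg.cont (m + 1) (ENat.add_one_natCast_le_withTop_of_lt hm))
    have hcurry : ∫ x, (p (z + x) (m + 1)).curryLeft ∂ν = (∫ x, p (z + x) (m + 1) ∂ν).curryLeft :=
      ContinuousLinearEquiv.integral_comp_comm (𝕜 := ℝ) (F := E →L[ℝ] E [×m]→L[ℝ] F)
        (continuousMultilinearCurryLeftEquiv ℝ (fun _ => E) F).toContinuousLinearEquiv _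
    rw [← hcurry]
    exact hasFDerivAt_integral_translate hK hν (hg.fderiv m hm) hcont z
  cont m hm := continuous_integral_translate hK hν (hg.cont m hm)

theorem contDiff_integral_translate {n : ℕ∞} (hK : IsCompact K) (hν : ∀ᵐ x ∂ν, x ∈ K)
    (hg : ContDiff ℝ n g) : ContDiff ℝ n fun z => ∫ x, g (z + x) ∂ν :=
  (hasFTaylorSeriesUpTo_integral_translate hK hν hg.ftaylorSeries).contDiff

theorem iteratedFDeriv_integral_translate_apply {m : ℕ} (hK : IsCompact K) (hν : ∀ᵐ x ∂ν, x ∈ K)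
    (hg : ContDiff ℝ m g) (z : E) (v : Fin m → E) :
    iteratedFDeriv ℝ m (fun z => ∫ x, g (z + x) ∂ν) z v =
      ∫ x, iteratedFDeriv ℝ m g (z + x) v ∂ν := by
  rw [← (hasFTaylorSeriesUpTo_integral_translate hK hν hg.ftaylorSeries).eq_iteratedFDeriv le_rfl]
  exact ContinuousMultilinearMap.integral_apply
    (integrable_translate hK hν hg.continuous_iteratedFDeriv' z) v

end IntegralTranslate

theorem setAverage_ball_eq_integral_cond {E F : Type*} [NormedAddCommGroup E] [MeasurableSpace E]
    [BorelSpace E] [NormedAddCommGroup F] [NormedSpace ℝ F] (μ : Measure E)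
    [μ.IsAddLeftInvariant] (g : E → F) (z : E) (r : ℝ) :
    ⨍ x in ball z r, g x ∂μ = ∫ x, g (z + x) ∂μ[|ball 0 r] := by
  have hball : (fun x => z + x) ⁻¹' ball z r = ball 0 r := by
    rw [preimage_add_ball, sub_self]
  have hshift := measurePreserving_add_left μ z
  have hmeasure : μ (ball 0 r) = μ (ball z r) := by
    rw [← hball, hshift.measure_preimage measurableSet_ball.nullMeasurableSet]
  have hintegral := hshift.setIntegral_preimage_emb (measurableEmbedding_addLeft z) g (ball z r)
  rw [hball] at hintegral
  rw [setAverage_eq, ProbabilityTheory.cond, integral_smul_measure, hintegral, hmeasure,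
    ENNReal.toReal_inv, Measure.real]

theorem iteratedFDeriv_two_sq_apply {𝕜 E : Type*} [NontriviallyNormedField 𝕜]
    [NormedAddCommGroup E] [NormedSpace 𝕜 E] {f : E → 𝕜} {z : E} (hf : ContDiffAt 𝕜 2 f z)
    (a b : E) :
    iteratedFDeriv 𝕜 2 (fun y => f y ^ 2) z ![a, b] =
      2 * (f z * iteratedFDeriv 𝕜 2 f z ![a, b] + fderiv 𝕜 f z a * fderiv 𝕜 f z b) := by
  have hfirst : fderiv 𝕜 (fun y => f y ^ 2) =ᶠ[𝓝 z] fun y => (2 * f y) • fderiv 𝕜 f y := by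
    filter_upwards [hf.eventually (by simp)] with y hy
    rw [fderiv_fun_pow 2 (hy.differentiableAt two_ne_zero)]
    simp
  have hd : DifferentiableAt 𝕜 f z := hf.differentiableAt two_ne_zero
  have hd' : DifferentiableAt 𝕜 (fderiv 𝕜 f) z :=
    (hf.fderiv_right (m := 1) (by norm_num)).differentiableAt one_ne_zero
  simp only [iteratedFDeriv_two_apply, Matrix.cons_val_zero, Matrix.cons_val_one]
  rw [hfirst.fderiv_eq, fderiv_fun_smul (hd.const_mul 2) hd', fderiv_const_mul hd 2]
  simp only [add_apply, smul_apply, ContinuousLinearMap.smulRight_apply, smul_eq_mul]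
  ring

section LeviForm

variable {V : Type*} [NormedAddCommGroup V] [NormedSpace ℝ V] [SMul ℂ V]

/-- The Levi form `∂_v ∂̄_v u = ¼ (D²u(v, v) + D²u(iv, iv))` of `u` at `z` in the complex
direction `v`. -/
def leviForm (u : V → ℝ) (z v : V) : ℝ :=
  (iteratedFDeriv ℝ 2 u z ![v, v] + iteratedFDeriv ℝ 2 u z ![I • v, I • v]) / 4

/-- The directional Wirtinger derivative `∂_v u = ½ (D_v u - i D_{iv} u)` of `u` at `z`. -/
def directionalWirtingerDeriv (u : V → ℝ) (v z : V) : ℂ :=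
  ((fderiv ℝ u z v : ℝ) - I * (fderiv ℝ u z (I • v) : ℝ)) / 2

theorem norm_directionalWirtingerDeriv_sq (u : V → ℝ) (v z : V) :
    ‖directionalWirtingerDeriv u v z‖ ^ 2 =
      (fderiv ℝ u z v ^ 2 + fderiv ℝ u z (I • v) ^ 2) / 4 := by
  rw [← Complex.normSq_eq_norm_sq, directionalWirtingerDeriv, Complex.normSq_apply]
  simp only [div_ofNat_re, sub_re, ofReal_re, mul_re, I_re, zero_mul, I_im, ofReal_im, mul_zero,
    sub_self, sub_zero, div_ofNat_im, sub_im, mul_im, one_mul, zero_add, zero_sub]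
  ring

theorem leviForm_sq {u : V → ℝ} {z : V} (hu : ContDiffAt ℝ 2 u z) (v : V) :
    leviForm (fun y => u y ^ 2) z v =
      2 * (u z * leviForm u z v) + 2 * ‖directionalWirtingerDeriv u v z‖ ^ 2 := by
  simp only [leviForm, norm_directionalWirtingerDeriv_sq, iteratedFDeriv_two_sq_apply hu]
  ring

variable {u : V → ℝ}

theorem continuous_leviForm (hu : ContDiff ℝ 2 u) (v : V) :
    Continuous fun z => leviForm u z v := by
  have : Continuous (iteratedFDeriv ℝ 2 u) := hu.continuous_iteratedFDeriv'
  unfold leviForm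
  fun_prop

theorem continuous_directionalWirtingerDeriv (hu : ContDiff ℝ 1 u) (v : V) :
    Continuous (directionalWirtingerDeriv u v) := by
  have : Continuous (fderiv ℝ u) := hu.continuous_fderiv one_ne_zero
  unfold directionalWirtingerDeriv
  fun_prop

variable [MeasurableSpace V] [BorelSpace V] {ν : Measure V} [IsFiniteMeasure ν] {K : Set V}

theorem leviForm_integral_translate (hK : IsCompact K) (hν : ∀ᵐ x ∂ν, x ∈ K)
    (hu : ContDiff ℝ 2 u) (z v : V) :
    leviForm (fun z => ∫ x, u (z + x) ∂ν) z v = ∫ x, leviForm u (z + x) v ∂ν := by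
  have hint (w : Fin 2 → V) : Integrable (fun x => iteratedFDeriv ℝ 2 u (z + x) w) ν :=
    integrable_translate hK hν (g := fun y => iteratedFDeriv ℝ 2 u y w)
      ((continuous_eval_const w).comp hu.continuous_iteratedFDeriv') z
  simp only [leviForm, iteratedFDeriv_integral_translate_apply hK hν hu]
  rw [integral_div, integral_add (hint _) (hint _)]

theorem leviForm_integral_translate_sq (hK : IsCompact K) (hν : ∀ᵐ x ∂ν, x ∈ K)
    (hu : ContDiff ℝ 2 u) (z v : V) :
    leviForm (fun z => ∫ x, u (z + x) ^ 2 ∂ν) z v =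
      2 * ∫ x, u (z + x) * leviForm u (z + x) v ∂ν +
        2 * ∫ x, ‖directionalWirtingerDeriv u v (z + x)‖ ^ 2 ∂ν := by
  have hlevi : Integrable (fun x => u (z + x) * leviForm u (z + x) v) ν :=
    integrable_translate hK hν (hu.continuous.mul (continuous_leviForm hu v)) z
  have hgrad : Integrable (fun x => ‖directionalWirtingerDeriv u v (z + x)‖ ^ 2) ν :=
    integrable_translate hK hν
      ((continuous_directionalWirtingerDeriv (hu.of_le one_le_two) v).norm.pow 2) z
  rw [leviForm_integral_translate hK hν (hu.pow 2)]
  simp only [leviForm_sq hu.contDiffAt]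
  rw [integral_add (hlevi.const_mul 2) (hgrad.const_mul 2), integral_const_mul, integral_const_mul]

end LeviForm

section Coordinates

variable {n : ℕ}

theorem map_eq_sum_ebasis {F 𝓛 : Type*} [AddCommGroup F] [Module ℝ F]
    [FunLike 𝓛 (EuclideanSpace ℂ (Fin n)) F] [LinearMapClass 𝓛 ℝ (EuclideanSpace ℂ (Fin n)) F]
    (L : 𝓛) (w : EuclideanSpace ℂ (Fin n)) :
    L w = ∑ j, ((w j).re • L (ebasis n j) + (w j).im • L (I • ebasis n j)) := by
  have hw : w = ∑ j, ((w j).re • ebasis n j + (w j).im • I • ebasis n j) := by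
    ext k
    simp [ebasis, Finset.sum_add_distrib, Pi.single_apply, Complex.re_add_im]
  conv_lhs => rw [hw]
  simp only [map_sum, map_add, map_smul]

theorem sum_mul_wirtingerDeriv (u : EuclideanSpace ℂ (Fin n) → ℝ)
    (w z : EuclideanSpace ℂ (Fin n)) :
    ∑ j, w j * wirtingerDeriv u j z = directionalWirtingerDeriv u w z := by
  rw [directionalWirtingerDeriv, map_eq_sum_ebasis _ w, map_eq_sum_ebasis _ (I • w)]
  simp only [wirtingerDeriv, ofReal_sum, Finset.mul_sum, ← Finset.sum_sub_distrib,
    Finset.sum_div]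
  refine Finset.sum_congr rfl fun j _ => ?_
  apply Complex.ext <;> simp <;> ring

/-- Coordinatewise complex conjugation on `ℂⁿ`. Since the entries `∂²u/∂z_j∂z̄_k` of the complex
Hessian are paired with `conj(w_j) w_k`, its Hermitian form at `w` is the Levi form at `conj w`. -/
def conjVec (w : EuclideanSpace ℂ (Fin n)) : EuclideanSpace ℂ (Fin n) :=
  WithLp.toLp 2 fun j => (starRingEnd ℂ) (w j)

theorem norm_conjVec (w : EuclideanSpace ℂ (Fin n)) : ‖conjVec w‖ = ‖w‖ := by
  simp [EuclideanSpace.norm_eq, conjVec]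

theorem map_map_eq_sum_ebasis {F : Type*} [NormedAddCommGroup F] [NormedSpace ℝ F]
    (B : EuclideanSpace ℂ (Fin n) →L[ℝ] EuclideanSpace ℂ (Fin n) →L[ℝ] F)
    (v w : EuclideanSpace ℂ (Fin n)) :
    B v w = ∑ j, ∑ k,
      ((v j).re • ((w k).re • B (ebasis n j) (ebasis n k) +
          (w k).im • B (ebasis n j) (I • ebasis n k)) +
        (v j).im • ((w k).re • B (I • ebasis n j) (ebasis n k) +
          (w k).im • B (I • ebasis n j) (I • ebasis n k))) := by
  rw [map_eq_sum_ebasis B v]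
  simp only [sum_apply, add_apply, smul_apply]
  simp only [map_eq_sum_ebasis _ w, Finset.smul_sum, ← Finset.sum_add_distrib]

theorem re_quadForm_complexHessian_eq_leviForm (u : EuclideanSpace ℂ (Fin n) → ℝ)
    (z w : EuclideanSpace ℂ (Fin n)) :
    (quadForm (complexHessian u z) w).re = leviForm u z (conjVec w) := by
  simp only [quadForm, complexHessian, leviForm, iteratedFDeriv_two_apply, Matrix.cons_val_zero,
    Matrix.cons_val_one]
  rw [map_map_eq_sum_ebasis _ (conjVec w), map_map_eq_sum_ebasis _ (I • conjVec w)]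
  simp only [conjVec, ← Finset.sum_add_distrib, Finset.sum_div, Complex.re_sum]
  refine Finset.sum_congr rfl fun j _ => Finset.sum_congr rfl fun k _ => ?_
  simp only [one_div, ofReal_add, ofReal_sub, mul_re, conj_re, inv_re, re_ofNat, normSq_ofNat,
    div_self_mul_self', add_re, ofReal_re, I_re, sub_re, zero_mul, I_im, sub_im, ofReal_im,
    sub_self, mul_zero, add_zero, inv_im, im_ofNat, neg_zero, zero_div, add_im, mul_im, one_mul,
    zero_add, sub_zero, conj_im, neg_mul, sub_neg_eq_add, smul_eq_mul, PiLp.smul_apply, mul_neg]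
  ring

end Coordinates

/-- Inequality (4) of the Liouville proof: if the averages of `|∂_w u|²` over `B(z₀,r)` are
bounded below by `c₁` in every unit direction `w`, then the ball average `[u²]_r` is `C²` near
`z₀` and `dd^c [u²]_r ≥ 2[u dd^c u]_r + 2c₁ β` there, as quadratic forms. -/
theorem hessian_average_sq_lower_bound
    (n : ℕ)
    (u : EuclideanSpace ℂ (Fin n) → ℝ) (hu : ContDiff ℝ 2 u)
    (r c₁ : ℝ) (hr : 0 < r) (hc₁ : 0 < c₁)
    (z₀ : EuclideanSpace ℂ (Fin n))
    (hlow : ∀ w : EuclideanSpace ℂ (Fin n), ‖w‖ = 1 →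
      c₁ ≤ ⨍ z in ball z₀ r, ‖∑ j, w j * wirtingerDeriv u j z‖ ^ 2) :
    ContDiffAt ℝ 2 (fun z => ⨍ w in ball z r, (u w) ^ 2) z₀ ∧
      ∀ w : EuclideanSpace ℂ (Fin n), ‖w‖ = 1 →
        2 * (⨍ z in ball z₀ r, u z * (quadForm (complexHessian u z) w).re) + 2 * c₁ ≤
          (quadForm (complexHessian (fun z => ⨍ w' in ball z r, (u w') ^ 2) z₀) w).re := by
  have hK : IsCompact (closedBall (0 : EuclideanSpace ℂ (Fin n)) r) := isCompact_closedBall 0 r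
  have hsupport : ∀ᵐ x ∂(volume : Measure (EuclideanSpace ℂ (Fin n)))[|ball 0 r],
      x ∈ closedBall 0 r :=
    ProbabilityTheory.ae_cond_of_forall_mem measurableSet_ball ball_subset_closedBall
  simp only [setAverage_ball_eq_integral_cond, re_quadForm_complexHessian_eq_leviForm,
    sum_mul_wirtingerDeriv] at hlow ⊢
  refine ⟨(contDiff_integral_translate (n := 2) hK hsupport (hu.pow 2)).contDiffAt,
    fun w hw => ?_⟩
  rw [leviForm_integral_translate_sq hK hsupport hu]
  gcongr
  exact hlow (conjVec w) ((norm_conjVec w).trans hw)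
end
end
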